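/- Let γ ∈ (0,1), λ ≥ 0, μ₁ > 0 be real numbers, and let b ≥ 0 satisfy b·γ < 1. Let l* ≥ 1 be a natural number and h : ℕ → ℝ a sequence such that h_{l*} < 0 ≤ h_{l*+1} and, for every l with 1 ≤ l ≤ l*, the inequality −(1 − b·γ)·h_l + γ·λ·(h_{l+1} − h_l) ≤ γ·μ₁·(h_l − h_{l−1}) holds. Then h_l < h_{l+1} for every l with 0 ≤ l < l*, and h_l < 0 for every l ≤ l*; that is, h_0 < h_1 < ⋯ < h_{l*} < 0. -/

import Mathlib

/-! Downward induction from `l*`: if `h l < 0` and `h l ≤ h (l + 1)` with `1 ≤ l ≤ l*`, then the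
left side of the recursive inequality at `l` is positive, hence so is `h l - h (l - 1)`; thus
`h (l - 1) < h l < 0`. At `l = l*` the two conditions hold because `h l* < 0 ≤ h (l* + 1)`. -/

/-- For real γ ∈ (0,1), λ ≥ 0, μ₁ > 0, b ≥ 0 with b·γ < 1, a natural
number l* ≥ 1, and a real sequence h with h_{l*} < 0 ≤ h_{l*+1} satisfying the
recursive inequality −(1 − bγ)·h_l + γλ·(h_{l+1} − h_l) ≤ γμ₁·(h_l − h_{l−1}) for
all 1 ≤ l ≤ l*, we have h_0 < h_1 < ⋯ < h_{l*} < 0. -/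
theorem stmt_0 (γ lam μ₁ b : ℝ) (hγ0 : 0 < γ) (hγ1 : γ < 1)
    (hlam : 0 ≤ lam) (hμ₁ : 0 < μ₁) (hb : 0 ≤ b) (hbγ : b * γ < 1)
    (lstar : ℕ) (hlstar : 1 ≤ lstar) (h : ℕ → ℝ)
    (hneg : h lstar < 0) (hpos : 0 ≤ h (lstar + 1))
    (hrec : ∀ l : ℕ, 1 ≤ l → l ≤ lstar →
      -(1 - b * γ) * h l + γ * lam * (h (l + 1) - h l) ≤ γ * μ₁ * (h l - h (l - 1))) :
    (∀ l : ℕ, l < lstar → h l < h (l + 1)) ∧ (∀ l : ℕ, l ≤ lstar → h l < 0) := by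
  have step : ∀ l : ℕ, l < lstar → h (l + 1) < 0 → h (l + 1) ≤ h (l + 2) → h l < h (l + 1) := by
    intro l hl hn hle
    have hr := hrec (l + 1) (by omega) (by omega)
    rw [Nat.add_sub_cancel] at hr
    have h1 : 0 < (1 - b * γ) * -h (l + 1) := mul_pos (by linarith) (by linarith)
    have h2 : 0 ≤ γ * lam * (h (l + 2) - h (l + 1)) :=
      mul_nonneg (mul_nonneg hγ0.le hlam) (by linarith)
    have h3 : 0 < γ * μ₁ * (h (l + 1) - h l) := by linarith
    have h4 := pos_of_mul_pos_right h3 (mul_pos hγ0 hμ₁).le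
    linarith
  have key : ∀ l : ℕ, l ≤ lstar → h l < 0 ∧ h l < h (l + 1) := by
    intro l hl
    induction hl using Nat.decreasingInduction with
    | self => exact ⟨hneg, by linarith⟩
    | of_succ k hk ih =>
      have := step k hk ih.1 ih.2.le
      exact ⟨by linarith [ih.1], this⟩
  exact ⟨fun l hl => (key l hl.le).2, fun l hl => (key l hl).1⟩
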